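/- Let G be a connected bridgeless finite simple cubic graph with n vertices and m edges whose flow polynomial F(G,t) has only real roots, and write F(G,t) = Σ_{i=0}^{m−n+1} c_i t^i. Then for every i with 0 ≤ i ≤ m−n+1 one has b_i ≤ |c_i|, where the b_i are defined by Σ_{i=0}^{m−n+1} b_i t^i = (t+1)(t+2)^{n/2}. -/

import Mathlib

open Polynomial

/-- The flow polynomial of a finite simple graph `G`:
`F(G,t) = Σ_{Z ⊆ E(G)} (−1)^{m−|Z|} t^{|Z|+c(Z)−n}`, where `c(Z)` is the number of
connected components of the spanning subgraph with edge set `Z`. -/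
noncomputable def flowPoly {V : Type} [Fintype V] (G : SimpleGraph V) : Polynomial ℤ :=
  ∑ Z ∈ G.edgeSet.toFinite.toFinset.powerset,
    (-1 : ℤ) ^ (G.edgeSet.toFinite.toFinset.card - Z.card) •
      (X : Polynomial ℤ) ^
        (Z.card + Nat.card (SimpleGraph.fromEdgeSet (↑Z : Set (Sym2 V))).ConnectedComponent
          - Fintype.card V)

/-- The number of edges of `G`. -/
noncomputable def edgeCount {V : Type} [Fintype V] (G : SimpleGraph V) : ℕ :=
  G.edgeSet.toFinite.toFinset.card

/-!
Up to signs, `F(G, t)` is `H(t) = T(0, t + 1)`, where `T` is the Tutte polynomial: `H` vanishes if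
there is a bridge, a loop contributes a factor `t + 1`, and otherwise `H` is the sum of its values
at the deletion and the contraction of an edge. Induction over multigraphs shows that a bridgeless
multigraph with cyclomatic number `a + k` and at least `2 * k` odd vertices satisfies
`H ≥ (t + 1) ^ a * (t + 2) ^ k` coefficientwise. Contracting an edge with an end of even degree
keeps all odd vertices. If all ends are odd, some edge can be deleted without creating a bridge;
deletion and contraction each lose at most two odd vertices, and the two bounds add up to
`(t + 1) ^ a * (t + 2) ^ k + (t + 1) ^ (a + 1) * (t + 2) ^ k = (t + 1) ^ a * (t + 2) ^ (k + 1)`.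
A connected cubic graph on `n` vertices has `n` odd vertices and cyclomatic number `n / 2 + 1`.
-/

theorem coeff_X_add_one_mul_le {R : Type*} [Semiring R] [PartialOrder R] [IsOrderedAddMonoid R]
    {p q : R[X]} (h : ∀ i, p.coeff i ≤ q.coeff i) (i : ℕ) :
    ((X + 1) * p).coeff i ≤ ((X + 1) * q).coeff i := by
  simp only [add_mul, one_mul, coeff_add]
  refine add_le_add ?_ (h i)
  cases i with
  | zero => simp
  | succ i => simpa only [coeff_X_mul] using h i

section Reachability

variable {V : Type*} {G H : SimpleGraph V} {u v : V}

theorem eq_of_reachable_of_adj {β : Type*} {f : V → β} (hf : ∀ x y, G.Adj x y → f x = f y)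
    (h : G.Reachable u v) : f u = f v := by
  obtain ⟨p⟩ := h
  induction p with
  | nil => rfl
  | cons hadj _ ih => exact (hf _ _ hadj).trans ih

theorem reachable_le_of_adj_le (h : G.Adj ≤ H.Reachable) : G.Reachable ≤ H.Reachable :=
  fun _ _ hr ↦ SimpleGraph.ConnectedComponent.exact <|
    eq_of_reachable_of_adj (f := H.connectedComponentMk)
      (fun x y hxy ↦ SimpleGraph.ConnectedComponent.sound (h x y hxy)) hr

theorem sup_edge_reachable : (G ⊔ SimpleGraph.edge u v).Reachable u v := by
  by_cases huv : u = v
  · exact huv ▸ .rfl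
  · exact SimpleGraph.Adj.reachable (.inr ((SimpleGraph.edge_adj ..).2 ⟨.inl ⟨rfl, rfl⟩, huv⟩))

theorem reachable_update_id_iff [DecidableEq V] {x y : V} :
    (G ⊔ SimpleGraph.edge u v).Reachable (Function.update id v u x) (Function.update id v u y) ↔
      (G ⊔ SimpleGraph.edge u v).Reachable x y := by
  have hupdate (z : V) :
      (G ⊔ SimpleGraph.edge u v).Reachable (Function.update id v u z) z := by
    by_cases hz : z = v
    · simpa [hz] using sup_edge_reachable (G := G)
    · simp [hz]
  exact ⟨fun h ↦ ((hupdate x).symm.trans h).trans (hupdate y),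
    fun h ↦ ((hupdate x).trans h).trans (hupdate y).symm⟩

theorem sup_edge_reachable_eq (h : G.Reachable u v) :
    (G ⊔ SimpleGraph.edge u v).Reachable = G.Reachable := by
  refine le_antisymm (reachable_le_of_adj_le ?_) (SimpleGraph.Reachable.mono' le_sup_left)
  rintro x y (hxy | hxy)
  · exact hxy.reachable
  · obtain ⟨⟨rfl, rfl⟩ | ⟨rfl, rfl⟩, -⟩ := (SimpleGraph.edge_adj ..).1 hxy
    exacts [h, h.symm]

theorem card_connectedComponent_congr (h : G.Reachable = H.Reachable) :
    Nat.card G.ConnectedComponent = Nat.card H.ConnectedComponent :=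
  congrArg (fun r ↦ Nat.card (Quot r)) h

/- Away from the class of `v`, the map induced by `G ≤ G ⊔ edge u v` is a bijection. -/
theorem card_connectedComponent_sup_edge_add_one [Finite V] (h : ¬ G.Reachable u v) :
    Nat.card (G ⊔ SimpleGraph.edge u v).ConnectedComponent + 1 =
      Nat.card G.ConnectedComponent := by
  classical
  let H := G ⊔ SimpleGraph.edge u v
  let comp := G.connectedComponentMk
  let merged (x : V) : G.ConnectedComponent := if comp x = comp v then comp u else comp x
  have merged_eq {x y : V} (hxy : H.Reachable x y) : merged x = merged y := by
    refine eq_of_reachable_of_adj (fun a b hab ↦ ?_) hxy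
    obtain hab | hab := hab
    · simp only [merged, comp, SimpleGraph.ConnectedComponent.sound hab.reachable]
    · obtain ⟨⟨rfl, rfl⟩ | ⟨rfl, rfl⟩, -⟩ := (SimpleGraph.edge_adj ..).1 hab <;> simp [merged]
  let f (c : {c : G.ConnectedComponent // c ≠ comp v}) : H.ConnectedComponent :=
    c.1.map (.ofLE le_sup_left)
  have f_bijective : f.Bijective := by
    constructor
    · rintro ⟨⟨x⟩, hx⟩ ⟨⟨y⟩, hy⟩ hxy
      have := merged_eq (SimpleGraph.ConnectedComponent.exact hxy)
      exact Subtype.ext ((if_neg hx).symm.trans (this.trans (if_neg hy)))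
    · rintro ⟨x⟩
      by_cases hx : comp x = comp v
      · refine ⟨⟨comp u, fun huv ↦ h (SimpleGraph.ConnectedComponent.exact huv)⟩, ?_⟩
        have hvx := (SimpleGraph.ConnectedComponent.exact hx).symm.mono
          (le_sup_left (a := G) (b := SimpleGraph.edge u v))
        exact SimpleGraph.ConnectedComponent.sound (sup_edge_reachable.trans hvx)
      · exact ⟨⟨comp x, hx⟩, rfl⟩
  rw [← Nat.card_congr (Equiv.ofBijective f f_bijective),
    ← Nat.card_congr (Equiv.optionSubtypeNe (comp v)), Finite.card_option]

end Reachability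

/-- A multigraph on the vertex set `V` with edges labelled by `ι`, given by its incidence map.
Deletion is encoded by keeping track of a finite set of surviving edges. -/
abbrev Multigraph (V ι : Type*) := ι → Sym2 V

namespace Multigraph

variable {V ι : Type*} (M : Multigraph V ι)

/-- The simple graph obtained from the spanning subgraph `(V, Z)` by discarding loops and
multiplicities. -/
def spanning (Z : Finset ι) : SimpleGraph V := SimpleGraph.fromEdgeSet (M '' Z)

/-- The number `c(Z)` of connected components of the spanning subgraph `(V, Z)`. -/
noncomputable def componentCount (Z : Finset ι) : ℕ := Nat.card (M.spanning Z).ConnectedComponent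

/-- The cyclomatic number `|Z| + c(Z) - |V|`; the subtraction is never truncated, by
`card_vertices_le`. -/
noncomputable def nullity (Z : Finset ι) : ℕ := Z.card + M.componentCount Z - Nat.card V

/-- Contraction of an edge joining `u` and `v`: the vertex `v` is merged into `u`, and stays in the
vertex set as an isolated vertex. -/
def contract [DecidableEq V] (u v : V) : Multigraph V ι :=
  fun i ↦ (M i).map (Function.update id v u)

section Spanning

variable {M} {Z Z' : Finset ι} {e : ι} {u v : V}

theorem nullity_empty [Finite V] : M.nullity ∅ = 0 := by
  have hle := Nat.card_le_card_of_surjective (M.spanning ∅).connectedComponentMk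
    Quot.mk_surjective
  rw [nullity, Finset.card_empty, zero_add]
  exact Nat.sub_eq_zero_of_le hle

theorem spanning_mono (h : Z ⊆ Z') : M.spanning Z ≤ M.spanning Z' :=
  SimpleGraph.fromEdgeSet_mono (Set.image_mono (Finset.coe_subset.2 h))

theorem spanning_reachable_of_mem (he : e ∈ Z) (huv : M e = s(u, v)) :
    (M.spanning Z).Reachable u v := by
  by_cases h : u = v
  · exact h ▸ .rfl
  · exact SimpleGraph.Adj.reachable ((SimpleGraph.fromEdgeSet_adj _).2 ⟨⟨e, he, huv⟩, h⟩)

theorem contract_spanning_sup_edge_reachable [DecidableEq V] (M : Multigraph V ι) (Z : Finset ι)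
    (u v : V) :
    ((M.contract u v).spanning Z ⊔ SimpleGraph.edge u v).Reachable =
      (M.spanning Z ⊔ SimpleGraph.edge u v).Reachable := by
  apply le_antisymm <;> refine reachable_le_of_adj_le ?_ <;> rintro x y (hxy | hxy)
  · obtain ⟨⟨i, hi, hxy⟩, -⟩ := (SimpleGraph.fromEdgeSet_adj _).1 hxy
    obtain ⟨a, b, hab⟩ := Sym2.exists.1 ⟨M i, rfl⟩
    have hreach := reachable_update_id_iff.2 <| (spanning_reachable_of_mem hi hab).mono <|
      le_sup_left (b := SimpleGraph.edge u v)
    rw [contract, hab, Sym2.map_mk, Sym2.eq_iff] at hxy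
    obtain ⟨rfl, rfl⟩ | ⟨rfl, rfl⟩ := hxy
    exacts [hreach, hreach.symm]
  · exact SimpleGraph.Adj.reachable (.inr hxy)
  · obtain ⟨⟨i, hi, hxy⟩, -⟩ := (SimpleGraph.fromEdgeSet_adj _).1 hxy
    have hmap : M.contract u v i = s(x, y).map (Function.update id v u) := congrArg _ hxy
    exact reachable_update_id_iff.1 <| (spanning_reachable_of_mem hi hmap).mono le_sup_left
  · exact SimpleGraph.Adj.reachable (.inr hxy)

theorem update_id_ne [DecidableEq V] (huv : u ≠ v) (x : V) : Function.update id v u x ≠ v := by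
  by_cases hx : x = v <;> simp [hx, huv]

theorem contract_spanning_not_reachable [DecidableEq V] (M : Multigraph V ι) (Z : Finset ι)
    (huv : u ≠ v) :
    ¬ ((M.contract u v).spanning Z).Reachable u v := by
  intro h
  have hmerged (x y : V) (hxy : ((M.contract u v).spanning Z).Adj x y) :
      (x = v) = (y = v) := by
    obtain ⟨⟨i, -, hxy⟩, -⟩ := (SimpleGraph.fromEdgeSet_adj _).1 hxy
    have hne {z : V} (hz : z ∈ s(x, y)) : z ≠ v := by
      rw [← hxy, contract, Sym2.mem_map] at hz
      obtain ⟨a, -, rfl⟩ := hz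
      exact update_id_ne huv a
    simp [hne (Sym2.mem_mk_left x y), hne (Sym2.mem_mk_right x y)]
  exact huv ((eq_of_reachable_of_adj (f := (· = v)) hmerged h).mpr rfl)

theorem spanning_insert [DecidableEq ι] (huv : M e = s(u, v)) :
    M.spanning (insert e Z) = M.spanning Z ⊔ SimpleGraph.edge u v := by
  rw [spanning, spanning, SimpleGraph.edge, ← SimpleGraph.fromEdgeSet_union, Finset.coe_insert,
    Set.image_insert_eq, huv, Set.union_singleton]

theorem componentCount_insert_of_reachable [DecidableEq ι] (huv : M e = s(u, v))
    (h : (M.spanning Z).Reachable u v) :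
    M.componentCount (insert e Z) = M.componentCount Z := by
  rw [componentCount, spanning_insert huv]
  exact card_connectedComponent_congr (sup_edge_reachable_eq h)

theorem componentCount_insert_add_one [DecidableEq ι] [Finite V] (huv : M e = s(u, v))
    (h : ¬ (M.spanning Z).Reachable u v) :
    M.componentCount (insert e Z) + 1 = M.componentCount Z := by
  rw [componentCount, spanning_insert huv]
  exact card_connectedComponent_sup_edge_add_one h

theorem card_vertices_le [Finite V] (M : Multigraph V ι) (Z : Finset ι) :
    Nat.card V ≤ Z.card + M.componentCount Z := by
  classical
  induction Z using Finset.induction_on with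
  | empty =>
    have hinj : (M.spanning ∅).connectedComponentMk.Injective := fun x y hxy ↦ by
      simpa [spanning] using SimpleGraph.ConnectedComponent.exact hxy
    simpa [componentCount] using Nat.card_le_card_of_injective _ hinj
  | insert e Z he ih =>
    obtain ⟨u, v, huv⟩ := Sym2.exists.1 ⟨M e, rfl⟩
    rw [Finset.card_insert_of_notMem he]
    by_cases h : (M.spanning Z).Reachable u v
    · have := componentCount_insert_of_reachable huv h
      omega
    · have := componentCount_insert_add_one huv h
      omega

theorem nullity_insert_of_reachable [DecidableEq ι] [Finite V] (he : e ∉ Z)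
    (huv : M e = s(u, v)) (h : (M.spanning Z).Reachable u v) :
    M.nullity (insert e Z) = M.nullity Z + 1 := by
  have := M.card_vertices_le Z
  rw [nullity, nullity, Finset.card_insert_of_notMem he, componentCount_insert_of_reachable huv h]
  omega

theorem nullity_insert_of_not_reachable [DecidableEq ι] [Finite V] (he : e ∉ Z)
    (huv : M e = s(u, v)) (h : ¬ (M.spanning Z).Reachable u v) :
    M.nullity (insert e Z) = M.nullity Z := by
  have := componentCount_insert_add_one huv h
  rw [nullity, nullity, Finset.card_insert_of_notMem he]
  omega

variable [DecidableEq ι] [DecidableEq V]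

theorem contract_componentCount [Finite V] (huv : u ≠ v) (he : M e = s(u, v)) :
    (M.contract u v).componentCount Z = M.componentCount (insert e Z) + 1 := by
  rw [componentCount, componentCount, spanning_insert he,
    ← card_connectedComponent_congr (M.contract_spanning_sup_edge_reachable Z u v),
    card_connectedComponent_sup_edge_add_one (M.contract_spanning_not_reachable Z huv)]

theorem contract_nullity [Finite V] (heZ : e ∉ Z) (huv : u ≠ v) (he : M e = s(u, v)) :
    (M.contract u v).nullity Z = M.nullity (insert e Z) := by
  rw [nullity, nullity, contract_componentCount huv he, Finset.card_insert_of_notMem heZ]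
  omega

end Spanning

section Cuts

open Classical in
/-- The cut `δ(A)`: the edges in `E` having exactly one end in `A`. In particular it contains no
loops. -/
noncomputable def cut (E : Finset ι) (A : Set V) : Finset ι :=
  {i ∈ E | ¬ ((M i).map (· ∈ A)).IsDiag}

/-- A multigraph is bridgeless if no cut consists of a single edge. -/
def Bridgeless (E : Finset ι) : Prop := ∀ A, (M.cut E A).card ≠ 1

/-- The vertices of odd degree; loops contribute two to the degree and may be ignored. -/
def oddVertices (E : Finset ι) : Set V := {x | Odd (M.cut E {x}).card}

variable {M} {E : Finset ι} {A B : Set V} {e : ι} {u v x : V}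

theorem mem_oddVertices : x ∈ M.oddVertices E ↔ Odd (M.cut E {x}).card := .rfl

theorem mem_cut (he : M e = s(u, v)) : e ∈ M.cut E A ↔ e ∈ E ∧ ¬ (u ∈ A ↔ v ∈ A) := by
  simp [cut, he]

theorem cut_subset : M.cut E A ⊆ E := Finset.filter_subset _ _

theorem cut_univ : M.cut E Set.univ = ∅ := by
  refine Finset.eq_empty_of_forall_notMem fun i ↦ ?_
  obtain ⟨u, v, huv⟩ := Sym2.exists.1 ⟨M i, rfl⟩
  simp [mem_cut huv]

theorem cut_compl : M.cut E Aᶜ = M.cut E A := by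
  ext i
  obtain ⟨u, v, huv⟩ := Sym2.exists.1 ⟨M i, rfl⟩
  simp only [mem_cut huv, Set.mem_compl_iff, not_iff_not]

theorem card_cut_inter_add_card_cut_union_le :
    (M.cut E (A ∩ B)).card + (M.cut E (A ∪ B)).card ≤ (M.cut E A).card + (M.cut E B).card := by
  simp only [cut, Finset.card_filter, ← Finset.sum_add_distrib]
  refine Finset.sum_le_sum fun i _ ↦ ?_
  obtain ⟨u, v, huv⟩ := Sym2.exists.1 ⟨M i, rfl⟩
  by_cases u ∈ A <;> by_cases v ∈ A <;> by_cases u ∈ B <;> by_cases v ∈ B <;> simp [*]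

theorem card_cut_sdiff_add_card_cut_sdiff_le :
    (M.cut E (A \ B)).card + (M.cut E (B \ A)).card ≤ (M.cut E A).card + (M.cut E B).card := by
  have h := card_cut_inter_add_card_cut_union_le (M := M) (E := E) (A := A) (B := Bᶜ)
  rwa [← cut_compl (A := A ∪ Bᶜ), Set.compl_union, compl_compl, Set.inter_comm Aᶜ,
    ← Set.sdiff_eq, ← Set.sdiff_eq, cut_compl] at h

theorem card_cut_le_card_cut_union_add_card_cut_sdiff :
    (M.cut E A).card ≤ (M.cut E (A ∪ B)).card + (M.cut E (B \ A)).card := by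
  have h := card_cut_sdiff_add_card_cut_sdiff_le (M := M) (E := E) (A := A ∪ B) (B := B \ A)
  have hA : (A ∪ B) \ (B \ A) = A := by grind
  exact (Nat.le_add_right _ _).trans (hA ▸ h)

theorem even_card_cut_symmDiff :
    Even ((M.cut E A).card + (M.cut E B).card + (M.cut E (symmDiff A B)).card) := by
  simp only [cut, Finset.card_filter, ← Finset.sum_add_distrib]
  refine Finset.even_sum _ fun i _ ↦ ?_
  obtain ⟨u, v, huv⟩ := Sym2.exists.1 ⟨M i, rfl⟩
  by_cases u ∈ A <;> by_cases v ∈ A <;> by_cases u ∈ B <;> by_cases v ∈ B <;>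
    simp [Set.mem_symmDiff, *]

variable [DecidableEq ι]

theorem cut_insert_of_mem_iff (he : M e = s(u, v)) (h : u ∈ A ↔ v ∈ A) :
    M.cut (insert e E) A = M.cut E A := by
  rw [cut, Finset.filter_insert, if_neg (by simp [he, h]), cut]

theorem erase_cut (e : ι) : M.cut (E.erase e) A = (M.cut E A).erase e :=
  Finset.filter_erase ..

theorem Bridgeless.spanning_reachable (h : M.Bridgeless (insert e E)) (huv : M e = s(u, v)) :
    (M.spanning E).Reachable u v := by
  by_contra hsep
  refine h {x | (M.spanning E).Reachable u x} (Finset.card_eq_one.2 ⟨e, ?_⟩)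
  ext i
  obtain ⟨a, b, hab⟩ := Sym2.exists.1 ⟨M i, rfl⟩
  rw [mem_cut hab, Finset.mem_insert, Finset.mem_singleton]
  constructor
  · rintro ⟨rfl | hi, hcross⟩
    · rfl
    · have hreach := spanning_reachable_of_mem hi hab
      exact absurd ⟨fun ha ↦ ha.trans hreach, fun hb ↦ hb.trans hreach.symm⟩ hcross
  · rintro rfl
    refine ⟨.inl rfl, fun h ↦ ?_⟩
    obtain ⟨rfl, rfl⟩ | ⟨rfl, rfl⟩ := Sym2.eq_iff.1 (huv.symm.trans hab)
    exacts [hsep (h.1 .rfl), hsep (h.2 .rfl)]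

theorem bridgeless_insert_loop (he : M e = s(u, u)) :
    M.Bridgeless (insert e E) ↔ M.Bridgeless E :=
  forall_congr' fun _ ↦ by rw [cut_insert_of_mem_iff he .rfl]

theorem oddVertices_insert_loop (he : M e = s(u, u)) :
    M.oddVertices (insert e E) = M.oddVertices E :=
  Set.ext fun _ ↦ by simp only [mem_oddVertices, cut_insert_of_mem_iff he .rfl]

theorem cut_contract [DecidableEq V] (he : M e = s(u, v)) :
    (M.contract u v).cut E A = M.cut (insert e E) (Function.update id v u ⁻¹' A) := by
  have hends : u ∈ Function.update id v u ⁻¹' A ↔ v ∈ Function.update id v u ⁻¹' A := by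
    by_cases h : u = v <;> simp [h]
  rw [cut_insert_of_mem_iff he hends]
  simp only [cut, contract, Sym2.map_map]
  rfl

theorem Bridgeless.contract [DecidableEq V] (h : M.Bridgeless (insert e E))
    (he : M e = s(u, v)) : (M.contract u v).Bridgeless E :=
  fun _ ↦ by rw [cut_contract he]; exact h _

theorem oddVertices_insert_sdiff_subset (he : M e = s(u, v)) :
    M.oddVertices (insert e E) \ {u, v} ⊆ M.oddVertices E := by
  rintro x ⟨hx, hxuv⟩
  have hends : u ∈ ({x} : Set V) ↔ v ∈ ({x} : Set V) := by
    simp only [Set.mem_insert_iff, Set.mem_singleton_iff, not_or] at hxuv ⊢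
    exact iff_of_false (Ne.symm hxuv.1) (Ne.symm hxuv.2)
  rwa [mem_oddVertices, cut_insert_of_mem_iff he hends] at hx

theorem oddVertices_insert_sdiff_subset_contract [DecidableEq V] (he : M e = s(u, v)) :
    M.oddVertices (insert e E) \ {u, v} ⊆ (M.contract u v).oddVertices E := by
  rintro x ⟨hx, hxuv⟩
  have hpre : Function.update id v u ⁻¹' {x} = {x} := by
    ext y
    by_cases hy : y = v <;> grind
  rwa [mem_oddVertices, cut_contract he, hpre]

theorem oddVertices_insert_subset_contract [DecidableEq V] (he : M e = s(u, v)) (huv : u ≠ v)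
    (hv : v ∉ M.oddVertices (insert e E)) :
    M.oddVertices (insert e E) ⊆ (M.contract u v).oddVertices E := by
  intro x hx
  have hxv : x ≠ v := fun h ↦ hv (h ▸ hx)
  obtain rfl | hxu := eq_or_ne x u
  · have hpre : Function.update id v x ⁻¹' {x} = symmDiff {x} {v} := by
      ext y
      by_cases hy : y = v <;> grind
    have hparity := even_card_cut_symmDiff (M := M) (E := insert e E) (A := {x}) (B := {v})
    rw [mem_oddVertices] at hx hv ⊢
    rw [cut_contract he, hpre]
    grind
  · exact oddVertices_insert_sdiff_subset_contract he ⟨hx, by simp [hxu, hxv]⟩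

end Cuts

section Deletion

variable {M} {E : Finset ι} {A B : Set V} {e : ι} {u v x : V}

theorem Bridgeless.three_le_card_cut_of_mem_oddVertices (h : M.Bridgeless E)
    (hx : x ∈ M.oddVertices E) : 3 ≤ (M.cut E {x}).card := by
  have hne := h {x}
  obtain ⟨r, hr⟩ := mem_oddVertices.1 hx
  omega

theorem Bridgeless.card_cut_inter_le_two_or_card_cut_sdiff_le_two (h : M.Bridgeless E)
    (hA : (M.cut E A).card ≤ 2) (hB : (M.cut E B).card ≤ 2) :
    (M.cut E (A ∩ B)).card ≤ 2 ∨ (M.cut E (A \ B)).card ≤ 2 := by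
  have hdiff := h (B \ A)
  have hinter := card_cut_inter_add_card_cut_union_le (M := M) (E := E) (A := A) (B := B)
  have hsdiff := card_cut_sdiff_add_card_cut_sdiff_le (M := M) (E := E) (A := A) (B := B)
  have hsub := card_cut_le_card_cut_union_add_card_cut_sdiff (M := M) (E := E) (A := A) (B := B)
  omega

variable [DecidableEq ι]

theorem Bridgeless.exists_card_cut_le_two_of_not_bridgeless_erase (h : M.Bridgeless E)
    (he : M e = s(u, v)) (herase : ¬ M.Bridgeless (E.erase e)) :
    ∃ B, (M.cut E B).card ≤ 2 ∧ ¬ (u ∈ B ↔ v ∈ B) := by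
  simp only [Bridgeless, not_forall, not_not, erase_cut] at herase
  obtain ⟨B, hB⟩ := herase
  have heB : e ∈ M.cut E B := by
    by_contra heB
    exact h B (by rwa [Finset.erase_eq_of_notMem heB] at hB)
  have hcard := Finset.card_erase_add_one heB
  exact ⟨B, by omega, ((mem_cut he).1 heB).2⟩

/- A minimal vertex set containing an odd vertex and bounded by at most two edges has an inner edge.
If deleting it created a bridge, some cut of size at most two would separate its ends, and
uncrossing would contradict minimality. -/
theorem Bridgeless.exists_bridgeless_erase [Finite V] (h : M.Bridgeless E) (hne : E.Nonempty)
    (hodd : ∀ i ∈ E, ∀ x ∈ M i, x ∈ M.oddVertices E) : ∃ e ∈ E, M.Bridgeless (E.erase e) := by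
  obtain ⟨A, hmin⟩ := exists_minimal_of_wellFoundedLT
    (fun A ↦ (M.cut E A).card ≤ 2 ∧ ∃ x ∈ A, x ∈ M.oddVertices E) <| by
      obtain ⟨i, hi⟩ := hne
      obtain ⟨u, v, huv⟩ := Sym2.exists.1 ⟨M i, rfl⟩
      exact ⟨Set.univ, by simp [cut_univ], u, Set.mem_univ u, hodd i hi u (by simp [huv])⟩
  obtain ⟨hA, x, hxA, hx⟩ := hmin.prop
  obtain ⟨e, hex, heA⟩ : ∃ e ∈ M.cut E {x}, e ∉ M.cut E A :=
    Finset.exists_mem_notMem_of_card_lt_card <|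
      hA.trans_lt (h.three_le_card_cut_of_mem_oddVertices hx)
  have heE : e ∈ E := cut_subset hex
  obtain ⟨u, v, huv⟩ := Sym2.exists.1 ⟨M e, rfl⟩
  have huA : u ∈ A ∧ v ∈ A := by
    rw [mem_cut huv] at hex heA
    grind
  refine ⟨e, heE, ?_⟩
  by_contra herase
  obtain ⟨B, hB, hsep⟩ := h.exists_card_cut_le_two_of_not_bridgeless_erase huv herase
  have hu : u ∈ M.oddVertices E := hodd e heE u (by simp [huv])
  have hv : v ∈ M.oddVertices E := hodd e heE v (by simp [huv])
  obtain hcut | hcut := h.card_cut_inter_le_two_or_card_cut_sdiff_le_two hA hB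
  · have := hmin.le_of_le ⟨hcut, by grind⟩ Set.inter_subset_left
    grind
  · have := hmin.le_of_le ⟨hcut, by grind⟩ Set.sdiff_subset
    grind

end Deletion

/-- The polynomial `(-1) ^ d * F(-t)`, where `F` is the flow polynomial of `(V, E)` and `d` its
cyclomatic number. It equals `T(0, t + 1)` for the Tutte polynomial `T`, so it has nonnegative
coefficients. -/
noncomputable def signlessFlowPoly (E : Finset ι) : ℤ[X] :=
  ∑ Z ∈ E.powerset, (-1 : ℤ) ^ (M.componentCount E + M.componentCount Z) • X ^ M.nullity Z

section DeletionContraction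

variable {M} {E : Finset ι} {e : ι} {u v : V}

theorem signlessFlowPoly_empty [Finite V] : M.signlessFlowPoly ∅ = 1 := by
  simp [signlessFlowPoly, nullity_empty, ← two_mul]

theorem signlessFlowPoly_insert [DecidableEq ι] (he : e ∉ E) :
    M.signlessFlowPoly (insert e E) =
      (∑ Z ∈ E.powerset, (-1 : ℤ) ^ (M.componentCount (insert e E) + M.componentCount Z) •
        X ^ M.nullity Z) +
      ∑ Z ∈ E.powerset, (-1 : ℤ) ^ (M.componentCount (insert e E) +
        M.componentCount (insert e Z)) • X ^ M.nullity (insert e Z) :=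
  Finset.sum_powerset_insert he _

theorem signlessFlowPoly_insert_loop [DecidableEq ι] [Finite V] (he : e ∉ E)
    (hloop : M e = s(u, u)) :
    M.signlessFlowPoly (insert e E) = (X + 1) * M.signlessFlowPoly E := by
  rw [signlessFlowPoly_insert he, componentCount_insert_of_reachable hloop .rfl, add_comm, add_mul,
    one_mul, signlessFlowPoly, Finset.mul_sum]
  congr 1
  refine Finset.sum_congr rfl fun Z hZ ↦ ?_
  have heZ : e ∉ Z := fun h ↦ he (Finset.mem_powerset.1 hZ h)
  rw [componentCount_insert_of_reachable hloop .rfl, nullity_insert_of_reachable heZ hloop .rfl,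
    mul_smul_comm, pow_succ' X]

theorem signlessFlowPoly_insert_of_not_reachable [DecidableEq ι] [Finite V] (he : e ∉ E)
    (huv : M e = s(u, v)) (h : ¬ (M.spanning E).Reachable u v) :
    M.signlessFlowPoly (insert e E) = 0 := by
  rw [signlessFlowPoly_insert he, ← Finset.sum_add_distrib]
  refine Finset.sum_eq_zero fun Z hZ ↦ ?_
  have hZE := Finset.mem_powerset.1 hZ
  have hZuv : ¬ (M.spanning Z).Reachable u v := fun hr ↦ h (hr.mono (spanning_mono hZE))
  rw [nullity_insert_of_not_reachable (fun heZ ↦ he (hZE heZ)) huv hZuv,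
    ← componentCount_insert_add_one huv hZuv, ← add_assoc, pow_succ]
  simp

theorem signlessFlowPoly_insert_of_reachable [DecidableEq ι] [DecidableEq V] [Finite V]
    (he : e ∉ E) (huv : M e = s(u, v)) (hne : u ≠ v) (h : (M.spanning E).Reachable u v) :
    M.signlessFlowPoly (insert e E) =
      M.signlessFlowPoly E + (M.contract u v).signlessFlowPoly E := by
  rw [signlessFlowPoly_insert he, componentCount_insert_of_reachable huv h]
  refine congrArg _ (Finset.sum_congr rfl fun Z hZ ↦ ?_)
  have heZ : e ∉ Z := fun h ↦ he (Finset.mem_powerset.1 hZ h)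
  rw [contract_nullity heZ hne huv, contract_componentCount hne huv,
    contract_componentCount hne huv, componentCount_insert_of_reachable huv h, add_add_add_comm,
    pow_add _ _ (1 + 1)]
  simp

theorem signlessFlowPoly_coeff_nonneg [Finite V] (M : Multigraph V ι) (E : Finset ι) (i : ℕ) :
    0 ≤ (M.signlessFlowPoly E).coeff i := by
  classical
  induction E using Finset.induction_on generalizing M i with
  | empty =>
    rw [signlessFlowPoly_empty, coeff_one]
    split_ifs <;> decide
  | insert e E he ih =>
    obtain ⟨u, v, huv⟩ := Sym2.exists.1 ⟨M e, rfl⟩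
    by_cases hreach : (M.spanning E).Reachable u v
    · obtain rfl | hne := eq_or_ne u v
      · rw [signlessFlowPoly_insert_loop he huv]
        simpa using coeff_X_add_one_mul_le (p := 0) (fun i ↦ by simpa using ih M i) i
      · rw [signlessFlowPoly_insert_of_reachable he huv hne hreach, coeff_add]
        exact add_nonneg (ih _ i) (ih _ i)
    · rw [signlessFlowPoly_insert_of_not_reachable he huv hreach, coeff_zero]

end DeletionContraction

/-- The coefficientwise lower bound `(t + 1) ^ a * (t + 2) ^ k`, with `a + k` the cyclomatic number,
for the signless flow polynomial of `(V, E)`. -/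
def HasFlowBound (E : Finset ι) (k : ℕ) : Prop :=
  ∃ a, M.nullity E = a + k ∧
    ∀ i, ((X + 1) ^ a * (X + 2) ^ k : ℤ[X]).coeff i ≤ (M.signlessFlowPoly E).coeff i

section FlowBound

variable {M} {E : Finset ι} {e : ι} {u v : V} {k : ℕ}

variable [DecidableEq ι] [Finite V]

theorem HasFlowBound.insert_loop (h : M.HasFlowBound E k) (he : e ∉ E) (hloop : M e = s(u, u)) :
    M.HasFlowBound (insert e E) k := by
  obtain ⟨a, hnullity, hle⟩ := h
  refine ⟨a + 1, ?_, fun i ↦ ?_⟩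
  · rw [nullity_insert_of_reachable he hloop .rfl, hnullity, add_right_comm]
  · rw [signlessFlowPoly_insert_loop he hloop, pow_succ', mul_assoc]
    exact coeff_X_add_one_mul_le hle i

variable [DecidableEq V]

theorem HasFlowBound.of_contract (h : (M.contract u v).HasFlowBound E k) (he : e ∉ E)
    (huv : M e = s(u, v)) (hne : u ≠ v) (hreach : (M.spanning E).Reachable u v) :
    M.HasFlowBound (insert e E) k := by
  obtain ⟨a, hnullity, hle⟩ := h
  refine ⟨a, by rw [← contract_nullity he hne huv, hnullity], fun i ↦ ?_⟩
  rw [signlessFlowPoly_insert_of_reachable he huv hne hreach, coeff_add]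
  exact (hle i).trans (le_add_of_nonneg_left (M.signlessFlowPoly_coeff_nonneg E i))

theorem HasFlowBound.of_contract_of_delete (hcontract : (M.contract u v).HasFlowBound E k)
    (hdelete : M.HasFlowBound E k) (he : e ∉ E) (huv : M e = s(u, v)) (hne : u ≠ v)
    (hreach : (M.spanning E).Reachable u v) : M.HasFlowBound (insert e E) (k + 1) := by
  obtain ⟨b, hb, hcontract_le⟩ := hcontract
  obtain ⟨a, ha, hdelete_le⟩ := hdelete
  rw [contract_nullity he hne huv, nullity_insert_of_reachable he huv hreach] at hb
  obtain rfl : b = a + 1 := by omega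
  refine ⟨a, by rw [nullity_insert_of_reachable he huv hreach, ha, add_assoc], fun i ↦ ?_⟩
  have hsplit : ((X + 1) ^ a * (X + 2) ^ (k + 1) : ℤ[X]) =
      (X + 1) ^ a * (X + 2) ^ k + (X + 1) ^ (a + 1) * (X + 2) ^ k := by ring
  rw [signlessFlowPoly_insert_of_reachable he huv hne hreach, hsplit, coeff_add, coeff_add]
  exact add_le_add (hdelete_le i) (hcontract_le i)

end FlowBound

section MainInduction

variable {M : Multigraph V ι} {E : Finset ι} {u v : V} {k : ℕ}

theorem oddVertices_empty : M.oddVertices ∅ = ∅ := by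
  simp [Set.eq_empty_iff_forall_notMem, mem_oddVertices, cut]

variable [Finite V]

theorem hasFlowBound_empty (hk : 2 * k ≤ (M.oddVertices ∅).ncard) : M.HasFlowBound ∅ k := by
  obtain rfl : k = 0 := by simpa [oddVertices_empty] using hk
  exact ⟨0, nullity_empty, by simp [signlessFlowPoly_empty]⟩

theorem two_mul_le_ncard_of_sdiff_pair_subset {S T : Set V} (hS : 2 * (k + 1) ≤ S.ncard)
    (hST : S \ {u, v} ⊆ T) : 2 * k ≤ T.ncard := by
  have hsdiff := Set.le_ncard_sdiff {u, v} S
  have hpair := Set.ncard_insert_le u {v}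
  rw [Set.ncard_singleton] at hpair
  have hT := Set.ncard_le_ncard hST
  omega

theorem Bridgeless.hasFlowBound (h : M.Bridgeless E) (hk : 2 * k ≤ (M.oddVertices E).ncard) :
    M.HasFlowBound E k := by
  classical
  induction hcard : E.card generalizing M E k with
  | zero =>
    obtain rfl := Finset.card_eq_zero.1 hcard
    exact hasFlowBound_empty hk
  | succ n ih =>
    have exists_insert {e} (he : e ∈ E) : ∃ E', e ∉ E' ∧ insert e E' = E ∧ E'.card = n :=
      ⟨E.erase e, E.notMem_erase e, Finset.insert_erase he, by simp [he, hcard]⟩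
    by_cases hloop : ∃ e ∈ E, ∃ u, M e = s(u, u)
    · obtain ⟨e, he, u, hu⟩ := hloop
      obtain ⟨E, heE, rfl, hE⟩ := exists_insert he
      rw [bridgeless_insert_loop hu] at h
      rw [oddVertices_insert_loop hu] at hk
      exact (ih h hk hE).insert_loop heE hu
    have ends_ne {e u v} (he : e ∈ E) (huv : M e = s(u, v)) : u ≠ v := by
      rintro rfl
      exact hloop ⟨e, he, u, huv⟩
    by_cases heven : ∃ e ∈ E, ∃ v ∈ M e, v ∉ M.oddVertices E
    · obtain ⟨e, he, v, ⟨u, hvu⟩, hv⟩ := heven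
      have huv : M e = s(u, v) := hvu.trans Sym2.eq_swap
      obtain ⟨E, heE, rfl, hE⟩ := exists_insert he
      have hodd := Set.ncard_le_ncard (oddVertices_insert_subset_contract huv (ends_ne he huv) hv)
      exact (ih (h.contract huv) (hk.trans hodd) hE).of_contract heE huv (ends_ne he huv)
        (h.spanning_reachable huv)
    push Not at heven
    obtain ⟨e, he, hdelete⟩ := h.exists_bridgeless_erase (Finset.card_pos.1 (by omega)) heven
    obtain ⟨u, v, huv⟩ := Sym2.exists.1 ⟨M e, rfl⟩
    obtain ⟨E, heE, rfl, hE⟩ := exists_insert he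
    rw [Finset.erase_insert heE] at hdelete
    cases k with
    | zero =>
      exact (ih (h.contract huv) (Nat.zero_le _) hE).of_contract heE huv (ends_ne he huv)
        (h.spanning_reachable huv)
    | succ k =>
      have hkcontract := two_mul_le_ncard_of_sdiff_pair_subset hk
        (oddVertices_insert_sdiff_subset_contract huv)
      have hkdelete := two_mul_le_ncard_of_sdiff_pair_subset hk
        (oddVertices_insert_sdiff_subset huv)
      exact (ih (h.contract huv) hkcontract hE).of_contract_of_delete (ih hdelete hkdelete hE) heE
        huv (ends_ne he huv) (h.spanning_reachable huv)

end MainInduction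

section SimpleGraph

variable (V) in
/-- The multigraph in which every unordered pair of vertices labels itself. A simple graph is
encoded by its edge set, as a set of surviving edges of this multigraph. -/
def complete : Multigraph V (Sym2 V) := id

/-- The edge set of a finite simple graph, as a set of edges of `complete V`. -/
noncomputable def edges [Finite V] (G : SimpleGraph V) : Finset (Sym2 V) :=
  G.edgeSet.toFinite.toFinset

theorem complete_componentCount (Z : Finset (Sym2 V)) :
    (complete V).componentCount Z =
      Nat.card (SimpleGraph.fromEdgeSet (Z : Set (Sym2 V))).ConnectedComponent := by
  rw [componentCount, spanning, complete, Set.image_id]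

variable [Finite V] (G : SimpleGraph V)

theorem complete_componentCount_edges :
    (complete V).componentCount (edges G) = Nat.card G.ConnectedComponent := by
  rw [complete_componentCount, edges, Set.Finite.coe_toFinset, SimpleGraph.fromEdgeSet_edgeSet]

theorem mem_cut_complete_edges {A : Set V} {u v : V} :
    s(u, v) ∈ (complete V).cut (edges G) A ↔ G.Adj u v ∧ ¬ (u ∈ A ↔ v ∈ A) := by
  rw [mem_cut (M := complete V) rfl, edges, Set.Finite.mem_toFinset, SimpleGraph.mem_edgeSet]

variable {G} in
theorem bridgeless_complete_edges (h : ∀ e ∈ G.edgeSet, ¬ G.IsBridge e) :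
    (complete V).Bridgeless (edges G) := by
  intro A hA
  obtain ⟨e, he⟩ := Finset.card_eq_one.1 hA
  obtain ⟨u, v, rfl⟩ := Sym2.exists.1 ⟨e, rfl⟩
  have hcut {x y : V} : s(x, y) = s(u, v) ↔ G.Adj x y ∧ ¬ (x ∈ A ↔ y ∈ A) := by
    rw [← mem_cut_complete_edges, he, Finset.mem_singleton]
  obtain ⟨huv, hsep⟩ := hcut.1 rfl
  have hreach := not_not.1 (mt SimpleGraph.isBridge_iff.2 (h _ huv))
  refine hsep (eq_of_reachable_of_adj (f := (· ∈ A)) (fun x y hxy ↦ ?_) hreach).to_iff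
  obtain ⟨hadj, hne⟩ := SimpleGraph.deleteEdges_adj.1 hxy
  exact propext (not_not.1 fun hcross ↦ hne (hcut.2 ⟨hadj, hcross⟩))

theorem card_cut_complete_edges_singleton (x : V) :
    ((complete V).cut (edges G) {x}).card = Nat.card (G.neighborSet x) := by
  classical
  have hcut : ((complete V).cut (edges G) {x} : Set (Sym2 V)) = G.incidenceSet x := by
    ext e
    obtain ⟨u, v, rfl⟩ := Sym2.exists.1 ⟨e, rfl⟩
    rw [Finset.mem_coe, mem_cut_complete_edges, SimpleGraph.mk'_mem_incidenceSet_iff]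
    refine and_congr_right fun hadj ↦ ?_
    have := hadj.ne
    grind
  rw [← Set.ncard_coe_finset, hcut, ← Nat.card_coe_set_eq,
    Nat.card_congr (G.incidenceSetEquivNeighborSet x)]

theorem oddVertices_complete_edges :
    (complete V).oddVertices (edges G) = {x | Odd (Nat.card (G.neighborSet x))} := by
  ext x
  rw [mem_oddVertices, card_cut_complete_edges_singleton, Set.mem_ofPred_eq]

end SimpleGraph

theorem card_edges {V : Type} [Fintype V] (G : SimpleGraph V) :
    (edges G).card = edgeCount G := rfl

theorem flowPoly_coeff {V : Type} [Fintype V] (G : SimpleGraph V) (i : ℕ) :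
    (flowPoly G).coeff i =
      (-1) ^ ((complete V).nullity (edges G) + i) *
        ((complete V).signlessFlowPoly (edges G)).coeff i := by
  have hedges : G.edgeSet.toFinite.toFinset = edges G := rfl
  rw [flowPoly, hedges, signlessFlowPoly, finsetSum_coeff, finsetSum_coeff, Finset.mul_sum]
  refine Finset.sum_congr rfl fun Z hZ ↦ ?_
  rw [← complete_componentCount, ← Nat.card_eq_fintype_card, ← nullity]
  simp only [coeff_smul, coeff_X_pow, smul_eq_mul, mul_ite, mul_one, mul_zero, ← pow_add]
  split_ifs with hi
  · have hZE := Finset.card_le_card (Finset.mem_powerset.1 hZ)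
    have hZle := (complete V).card_vertices_le Z
    have hEle := (complete V).card_vertices_le (edges G)
    have hexp : (complete V).nullity (edges G) + i +
        ((complete V).componentCount (edges G) + (complete V).componentCount Z) =
          ((edges G).card - Z.card) +
            2 * ((complete V).nullity Z + (complete V).componentCount (edges G)) := by
      rw [hi, nullity, nullity]
      omega
    rw [hexp, pow_add, pow_mul, neg_one_sq, one_pow, mul_one]
  · rfl

theorem abs_flowPoly_coeff {V : Type} [Fintype V] (G : SimpleGraph V) (i : ℕ) :
    |(flowPoly G).coeff i| = ((complete V).signlessFlowPoly (edges G)).coeff i := by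
  classical
  rw [flowPoly_coeff, abs_mul, abs_neg_one_pow, one_mul,
    abs_of_nonneg (signlessFlowPoly_coeff_nonneg ..)]

end Multigraph

theorem three_mul_card_eq_two_mul_edgeCount {V : Type} [Fintype V] {G : SimpleGraph V}
    (hcubic : ∀ v : V, Nat.card (G.neighborSet v) = 3) :
    3 * Fintype.card V = 2 * edgeCount G := by
  classical
  have hdegree : ∑ v, G.degree v = ∑ _ : V, 3 := Finset.sum_congr rfl fun v _ ↦ by
    rw [← hcubic v, Nat.card_eq_fintype_card, SimpleGraph.card_neighborSet_eq_degree]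
  have hedges : edgeCount G = G.edgeFinset.card := by
    rw [edgeCount, Set.Finite.toFinset_eq_toFinset, SimpleGraph.edgeFinset]
  rw [hedges, ← G.sum_degrees_eq_twice_card_edges, hdegree]
  simp [mul_comm]

theorem stmt_3_general {V : Type} [Fintype V] (G : SimpleGraph V)
    (hbridgeless : ∀ e ∈ G.edgeSet, ¬ G.IsBridge e) (k : ℕ)
    (hk : 2 * k ≤ {v | Odd (Nat.card (G.neighborSet v))}.ncard) :
    ∃ a, edgeCount G + Nat.card G.ConnectedComponent = Fintype.card V + a + k ∧
      ∀ i, ((X + 1) ^ a * (X + 2) ^ k : ℤ[X]).coeff i ≤ |(flowPoly G).coeff i| := by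
  rw [← Multigraph.oddVertices_complete_edges] at hk
  obtain ⟨a, hnullity, hle⟩ := (Multigraph.bridgeless_complete_edges hbridgeless).hasFlowBound hk
  refine ⟨a, ?_, fun i ↦ (hle i).trans_eq (Multigraph.abs_flowPoly_coeff G i).symm⟩
  have hcard := (Multigraph.complete V).card_vertices_le (Multigraph.edges G)
  rw [Multigraph.nullity] at hnullity
  rw [Multigraph.card_edges, Multigraph.complete_componentCount_edges,
    Nat.card_eq_fintype_card (α := V)] at hnullity hcard
  omega

/-- Lower bound on the absolute values of the coefficients of the flow polynomial of a
connected bridgeless simple cubic graph with only real flow roots. -/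
theorem stmt_3 {V : Type} [Fintype V] (G : SimpleGraph V)
    (hconn : G.Connected) (hbridgeless : ∀ e : Sym2 V, ¬ G.IsBridge e)
    (hcubic : ∀ v : V, Nat.card (G.neighborSet v) = 3)
    (hreal : ∀ z : ℂ, ((flowPoly G).map (Int.castRingHom ℂ)).IsRoot z → z.im = 0)
    (n m : ℕ) (hn : n = Fintype.card V) (hm : m = edgeCount G) :
    ∀ i ≤ m - n + 1,
      ((X + 1) * (X + 2) ^ (n / 2) : Polynomial ℤ).coeff i ≤ |(flowPoly G).coeff i| := by
  have hodd : {v | Odd (Nat.card (G.neighborSet v))} = Set.univ :=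
    Set.eq_univ_of_forall fun v ↦ by
      rw [Set.mem_ofPred_eq, hcubic v]
      decide
  obtain ⟨a, ha, hle⟩ := stmt_3_general G (fun e _ ↦ hbridgeless e) (n / 2) <| by
    rw [hodd, Set.ncard_univ, Nat.card_eq_fintype_card, hn]
    exact Nat.mul_div_le _ 2
  have hcomponents : Nat.card G.ConnectedComponent = 1 := by
    have := hconn.preconnected.subsingleton_connectedComponent
    have := hconn.nonempty
    exact Nat.card_unique
  have hhandshake := three_mul_card_eq_two_mul_edgeCount hcubic
  obtain rfl : a = 1 := by omega
  exact fun i _ ↦ pow_one (X + 1 : ℤ[X]) ▸ hle i
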